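/- arXiv:1002.3256 — 2 statements merged into one kernel-verified Lean document; each statement's English description precedes it below -/
import Mathlib

section
/- Under Jacod's density hypothesis, for all 0 ≤ t ≤ θ and every bounded nonnegative F_θ ⊗ B(ℝ)-measurable function φ_θ : Ω × ℝ → ℝ, there exists an F_t ⊗ B(ℝ)-measurable function v : Ω × ℝ → ℝ such that for P^L-almost every x ∈ ℝ, v(·,x) is a version of the conditional expectation E_P[φ_θ(·,x) p_θ(x) 1_{X*_θ > x} | F_t]; and for every such function v one has, P-almost surely, E_P[φ_θ(·,L) 1_{τ > θ} | G^M_t] = v(·,L) / p_t(L). (Proposition 3.1 of the paper.) -/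
open MeasureTheory ProbabilityTheory Set
open scoped NNReal Classical

noncomputable section

/-- Running infimum `X*_t = inf_{s ≤ t} X_s` of the process `X` over the time interval
`[0, t]`. -/
def runInf {Ω : Type*} (X : ℝ≥0 → Ω → ℝ) (t : ℝ≥0) (ω : Ω) : ℝ :=
  ⨅ s : Set.Icc (0 : ℝ≥0) t, X s.1 ω

/-!
Jacod's hypothesis says that on `F_t ⊗ B(ℝ)` the law of `(ω, L ω)` has density `p_t` with respect
to `P ⊗ P^L`. An event of `F_t ∨ σ(L)` has the form `{ω | (ω, L ω) ∈ S}` with `S ∈ F_t ⊗ B(ℝ)`, so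
integrating the payoff over it with density `p_θ`, conditioning every section of the integrand on
`F_t`, and reading the result with density `p_t` gives Bayes' formula `v(·, L) / p_t(L)`. Versions
of the conditional expectations have exceptional sets depending on the parameter `x`; a monotone
class argument, started at rectangles, chooses them jointly measurable.
-/

open scoped ENNReal

section RunningInfimum

variable {Ω : Type*} {m0 : MeasurableSpace Ω} {F : Filtration ℝ≥0 m0} {X : ℝ≥0 → Ω → ℝ}

lemma measurable_runInf (hX : Adapted F X) (hc : ∀ ω, Continuous fun s => X s ω) (θ : ℝ≥0) :
    Measurable[F θ] (runInf X θ) := by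
  obtain ⟨D, hD_countable, hD_dense⟩ :=
    TopologicalSpace.exists_countable_dense (Set.Icc (0 : ℝ≥0) θ)
  have : Countable D := hD_countable
  have hinf : runInf X θ = fun ω => ⨅ s : D, X s.1.1 ω :=
    funext fun ω => (hD_dense.ciInf' ((hc ω).comp continuous_subtype_val)).symm
  rw [hinf]
  exact Measurable.iInf fun s => (hX s.1.1).mono (F.mono s.1.2.2) le_rfl

lemma measurableSet_lt_runInf (hX : Adapted F X) (hc : ∀ ω, Continuous fun s => X s ω)
    (θ : ℝ≥0) :
    MeasurableSet[(F θ).prod inferInstance] {q : Ω × ℝ | q.2 < runInf X θ q.1} :=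
  measurableSet_lt measurable_snd ((measurable_runInf hX hc θ).comp measurable_fst)

end RunningInfimum

section ProductMeasurability

variable {Ω β γ : Type*} {m m' : MeasurableSpace Ω} {mβ : MeasurableSpace β}
  [MeasurableSpace γ]

lemma measurableSpace_prod_mono_left (hmm' : m ≤ m') : m.prod mβ ≤ m'.prod mβ :=
  sup_le_sup_right (MeasurableSpace.comap_mono hmm') _

lemma comap_graph (m : MeasurableSpace Ω) (L : Ω → β) :
    (m.prod mβ).comap (fun ω => (ω, L ω)) = m ⊔ mβ.comap L := by
  rw [MeasurableSpace.comap_prodMk]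
  exact congrArg (· ⊔ _) MeasurableSpace.comap_id

lemma measurable_comp_graph (L : Ω → β) {f : Ω × β → γ} (hf : Measurable[m.prod mβ] f) :
    Measurable[m ⊔ mβ.comap L] fun ω => f (ω, L ω) := by
  rw [← comap_graph m L]
  exact hf.comp (comap_measurable _)

lemma measurableSet_preimage_graph (L : Ω → β) {S : Set (Ω × β)} (hS : MeasurableSet[m.prod mβ] S) :
    MeasurableSet[m ⊔ mβ.comap L] {ω | (ω, L ω) ∈ S} := by
  rw [← comap_graph m L]
  exact ⟨S, hS, rfl⟩

lemma measurable_section {f : Ω × β → γ} (hf : Measurable[m.prod mβ] f) (x : β) :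
    Measurable[m] fun ω => f (ω, x) :=
  hf.comp measurable_prodMk_right

lemma measurableSet_section {S : Set (Ω × β)} (hS : MeasurableSet[m.prod mβ] S) (x : β) :
    MeasurableSet[m] {ω | (ω, x) ∈ S} :=
  measurable_prodMk_right hS

end ProductMeasurability

section SectionwiseCondLExp

variable {Ω β : Type*} {m m0 : MeasurableSpace Ω} [mβ : MeasurableSpace β] {P : Measure[m0] Ω}

/-- `V` is a jointly measurable choice of versions of the conditional expectations given `m` of
the sections `h (·, x)`, for every value of the parameter `x`. -/
structure IsSectionwiseCondLExp (m : MeasurableSpace Ω) (P : Measure[m0] Ω)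
    (h V : Ω × β → ℝ≥0∞) : Prop where
  measurable : Measurable[m.prod mβ] V
  ae_eq : ∀ x, (fun ω => V (ω, x)) =ᵐ[P] P⁻[fun ω => h (ω, x) | m]

namespace IsSectionwiseCondLExp

lemma add {h₁ h₂ V₁ V₂ : Ω × β → ℝ≥0∞} (hh₁ : Measurable h₁)
    (H₁ : IsSectionwiseCondLExp m P h₁ V₁) (H₂ : IsSectionwiseCondLExp m P h₂ V₂) :
    IsSectionwiseCondLExp m P (fun q => h₁ q + h₂ q) (fun q => V₁ q + V₂ q) where
  measurable := H₁.measurable.add H₂.measurable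
  ae_eq x := ((H₁.ae_eq x).fun_add (H₂.ae_eq x)).trans
    (condLExp_add_left _ (measurable_section hh₁ x).aemeasurable).symm

lemma const_mul {h V : Ω × β → ℝ≥0∞} (hh : Measurable h) (H : IsSectionwiseCondLExp m P h V)
    (c : ℝ≥0∞) : IsSectionwiseCondLExp m P (fun q => c * h q) (fun q => c * V q) where
  measurable := Measurable.const_smul H.measurable c
  ae_eq x := ((H.ae_eq x).const_smul c).trans
    (condLExp_smul _ (measurable_section hh x).aemeasurable c).symm

lemma tsum {h V : ℕ → Ω × β → ℝ≥0∞} (hh : ∀ n, Measurable (h n))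
    (H : ∀ n, IsSectionwiseCondLExp m P (h n) (V n)) :
    IsSectionwiseCondLExp m P (fun q => ∑' n, h n q) (fun q => ∑' n, V n q) where
  measurable := by
    let := m.prod mβ
    exact Measurable.tsum fun n => (H n).measurable
  ae_eq x := by
    have hsection : (fun ω => ∑' n, h n (ω, x)) = ∑' n, fun ω => h n (ω, x) := by
      ext ω
      rw [ENNReal.tsum_apply]
    have hsum := condLExp_tsum m (P := P) fun n => (measurable_section (hh n) x).aemeasurable
    rw [hsection]
    filter_upwards [hsum, ae_all_iff.2 fun n => (H n).ae_eq x] with ω hω hV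
    rw [hω, ENNReal.tsum_apply]
    exact tsum_congr hV

lemma indicator_prod (s : Set Ω) {t : Set β} (ht : MeasurableSet t) :
    IsSectionwiseCondLExp m P ((s ×ˢ t).indicator 1)
      (fun q => t.indicator 1 q.2 * P⁻[s.indicator 1 | m] q.1) where
  measurable := ((measurable_one.indicator ht).comp measurable_snd).mul
    ((measurable_condLExp m P _).comp measurable_fst)
  ae_eq x := by
    have hsection : (fun ω => (s ×ˢ t).indicator (1 : Ω × β → ℝ≥0∞) (ω, x)) =
        if x ∈ t then s.indicator 1 else 0 := by
      ext ω
      by_cases hx : x ∈ t <;> simp [indicator, hx]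
    by_cases hx : x ∈ t
    · simp [hsection, hx]
    · simp only [hsection, hx, ↓reduceIte, indicator_of_notMem, not_false_eq_true, zero_mul,
        condLExp_zero]
      rfl

lemma indicator_compl (hm : m ≤ m0) [SigmaFinite (P.trim hm)] {S : Set (Ω × β)}
    (hS : MeasurableSet S) {V : Ω × β → ℝ≥0∞} (H : IsSectionwiseCondLExp m P (S.indicator 1) V) :
    IsSectionwiseCondLExp m P (Sᶜ.indicator 1) (1 - V) where
  measurable := H.measurable.const_sub 1
  ae_eq x := by
    have hsplit : (fun ω => S.indicator (1 : Ω × β → ℝ≥0∞) (ω, x)) +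
        (fun ω => Sᶜ.indicator (1 : Ω × β → ℝ≥0∞) (ω, x)) = fun _ => 1 :=
      funext fun ω => congrFun (indicator_self_add_compl S 1) (ω, x)
    have hadd := condLExp_add_left (P := P) (mΩ := m)
      (fun ω => Sᶜ.indicator (1 : Ω × β → ℝ≥0∞) (ω, x))
      (measurable_section (measurable_one.indicator hS) x).aemeasurable
    rw [hsplit, condLExp_const hm] at hadd
    filter_upwards [hadd, H.ae_eq x] with ω hω hV
    rw [Pi.add_apply, ← hV] at hω
    have hV_ne_top : V (ω, x) ≠ ∞ := ne_top_of_le_ne_top ENNReal.one_ne_top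
      (hω.symm ▸ le_self_add)
    exact (ENNReal.eq_sub_of_add_eq hV_ne_top ((add_comm _ _).trans hω.symm)).symm

end IsSectionwiseCondLExp

lemma exists_isSectionwiseCondLExp_indicator (hm : m ≤ m0) [SigmaFinite (P.trim hm)]
    {S : Set (Ω × β)} (hS : MeasurableSet S) :
    ∃ V, IsSectionwiseCondLExp m P (S.indicator 1) V := by
  induction S, hS using MeasurableSpace.induction_on_inter generateFrom_prod.symm
    isPiSystem_prod with
  | empty =>
    rw [← empty_prod (t := (∅ : Set β))]
    exact ⟨_, .indicator_prod ∅ .empty⟩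
  | basic S hS =>
    obtain ⟨s, -, t, ht, rfl⟩ := hS
    exact ⟨_, .indicator_prod s ht⟩
  | compl S hS ih =>
    obtain ⟨V, hV⟩ := ih
    exact ⟨_, hV.indicator_compl hm hS⟩
  | iUnion f hdisj hf ih =>
    choose V hV using ih
    have hindicator : (⋃ n, f n).indicator (1 : Ω × β → ℝ≥0∞) =
        fun q => ∑' n, (f n).indicator 1 q :=
      funext fun q => by
        -- The Dirac mass at `q` turns σ-additivity into this identity of indicators.
        simpa [Measure.dirac_apply', hf, MeasurableSet.iUnion hf] using
          measure_iUnion (μ := .dirac q) hdisj hf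
    rw [hindicator]
    exact ⟨_, .tsum (fun n => measurable_one.indicator (hf n)) hV⟩

lemma exists_isSectionwiseCondLExp_simpleFunc (hm : m ≤ m0) [SigmaFinite (P.trim hm)]
    (h : SimpleFunc (Ω × β) ℝ≥0) :
    ∃ V, IsSectionwiseCondLExp m P (fun q => (h q : ℝ≥0∞)) V := by
  induction h using SimpleFunc.induction with
  | @const c S hS =>
    obtain ⟨V, hV⟩ := exists_isSectionwiseCondLExp_indicator (P := P) hm hS
    have hpiecewise : (fun q => (SimpleFunc.piecewise S hS (.const _ c) (.const _ 0) q : ℝ≥0∞)) =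
        fun q => (c : ℝ≥0∞) * S.indicator 1 q := by
      ext q
      by_cases hq : q ∈ S <;> simp [hq]
    exact ⟨_, hpiecewise ▸ hV.const_mul (measurable_one.indicator hS) (c : ℝ≥0∞)⟩
  | @add f g _ hf hg =>
    obtain ⟨V, hV⟩ := hf
    obtain ⟨W, hW⟩ := hg
    refine ⟨fun q => V q + W q, ?_⟩
    simpa only [SimpleFunc.coe_add, Pi.add_apply, ENNReal.coe_add] using
      hV.add f.measurable.coe_nnreal_ennreal hW

theorem exists_isSectionwiseCondLExp (hm : m ≤ m0) [SigmaFinite (P.trim hm)] {h : Ω × β → ℝ≥0∞}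
    (hh : Measurable h) : ∃ V, IsSectionwiseCondLExp m P h V := by
  choose V hV using fun n =>
    exists_isSectionwiseCondLExp_simpleFunc (P := P) hm (SimpleFunc.eapproxDiff h n)
  refine ⟨fun q => ∑' n, V n q, ?_⟩
  simpa only [SimpleFunc.tsum_eapproxDiff h hh] using IsSectionwiseCondLExp.tsum
    (fun n => (SimpleFunc.eapproxDiff h n).measurable.coe_nnreal_ennreal) hV

lemma toReal_condLExp_ofReal_sub (m : MeasurableSpace Ω) {f : Ω → ℝ} (hf : Integrable f P) :
    (fun ω => (P⁻[fun ω => .ofReal (f ω) | m] ω).toReal -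
      (P⁻[fun ω => .ofReal (-f ω) | m] ω).toReal) =ᵐ[P] P[f | m] := by
  have hpos := toReal_condLExp m hf.aemeasurable.ennreal_ofReal hf.lintegral_lt_top.ne
  have hneg := toReal_condLExp m hf.neg.aemeasurable.ennreal_ofReal hf.neg.lintegral_lt_top.ne
  refine (hpos.sub hneg).trans ?_
  simp only [ENNReal.toReal_ofReal']
  refine (condExp_sub hf.pos_part hf.neg.pos_part m).symm.trans (.of_eq ?_)
  congr 1 with ω
  exact max_zero_sub_eq_self (f ω)

theorem exists_measurable_section_ae_eq_condExp (hm : m ≤ m0) [SigmaFinite (P.trim hm)]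
    {ν : Measure β} {h : Ω × β → ℝ} (hh : Measurable h)
    (hint : ∀ᵐ x ∂ν, Integrable (fun ω => h (ω, x)) P) :
    ∃ v : Ω × β → ℝ, Measurable[m.prod mβ] v ∧
      ∀ᵐ x ∂ν, (fun ω => v (ω, x)) =ᵐ[P] P[fun ω => h (ω, x) | m] := by
  obtain ⟨V, hV⟩ := exists_isSectionwiseCondLExp (P := P) hm hh.ennreal_ofReal
  obtain ⟨W, hW⟩ := exists_isSectionwiseCondLExp (P := P) hm hh.neg.ennreal_ofReal
  refine ⟨fun q => (V q).toReal - (W q).toReal,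
    hV.measurable.ennreal_toReal.sub hW.measurable.ennreal_toReal, ?_⟩
  filter_upwards [hint] with x hx
  filter_upwards [hV.ae_eq x, hW.ae_eq x, toReal_condLExp_ofReal_sub m hx] with ω hVω hWω hω
  rw [hVω, hWω, ← hω]
  rfl

end SectionwiseCondLExp

section JointDensity

variable {Ω α β : Type*} [MeasurableSpace Ω] [MeasurableSpace α] [MeasurableSpace β]
  {P : Measure Ω} [IsFiniteMeasure P] {ν : Measure β} [SFinite ν] {T : Ω → α} {L : Ω → β}
  {q : α × β → ℝ≥0∞}

lemma map_prodMk_eq_withDensity (hT : Measurable T) (hL : Measurable L) (hq : Measurable q)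
    (hrect : ∀ s t, MeasurableSet s → MeasurableSet t →
      P (T ⁻¹' s ∩ L ⁻¹' t) = ∫⁻ ω in T ⁻¹' s, ∫⁻ b in t, q (T ω, b) ∂ν ∂P) :
    P.map (fun ω => (T ω, L ω)) = ((P.map T).prod ν).withDensity q := by
  refine Measure.ext_prod fun {s t} hs ht => ?_
  have hq_section : Measurable fun a => ∫⁻ b in t, q (a, b) ∂ν := hq.lintegral_prod_right'
  rw [Measure.map_apply (hT.prodMk hL) (hs.prod ht), mk_preimage_prod, hrect s t hs ht,
    withDensity_apply _ (hs.prod ht), ← Measure.prod_restrict, lintegral_prod _ hq.aemeasurable,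
    setLIntegral_map hs hq_section hT]

lemma lintegral_prodMk_eq (hT : Measurable T) (hL : Measurable L) (hq : Measurable q)
    (hrect : ∀ s t, MeasurableSet s → MeasurableSet t →
      P (T ⁻¹' s ∩ L ⁻¹' t) = ∫⁻ ω in T ⁻¹' s, ∫⁻ b in t, q (T ω, b) ∂ν ∂P)
    {g : α × β → ℝ≥0∞} (hg : Measurable g) :
    ∫⁻ ω, g (T ω, L ω) ∂P = ∫⁻ b, ∫⁻ ω, q (T ω, b) * g (T ω, b) ∂P ∂ν := by
  rw [← lintegral_map hg (hT.prodMk hL), map_prodMk_eq_withDensity hT hL hq hrect,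
    lintegral_withDensity_eq_lintegral_mul _ hq hg, lintegral_prod_symm' _ (hq.mul hg)]
  exact lintegral_congr fun b =>
    lintegral_map ((hq.mul hg).comp measurable_prodMk_right) hT

end JointDensity

section JacodDensity

variable {Ω β : Type*} {m m' m0 : MeasurableSpace Ω} [mβ : MeasurableSpace β]
  {P : Measure[m0] Ω} {L : Ω → β} {ν : Measure β} {p p' : β → Ω → ℝ}

/-- Jacod's hypothesis for one σ-algebra `m`: `p` is a jointly measurable density with respect to
`ν` of the conditional law of `L` given `m`. As in `∫ f(x) p(x, ω) ν(dx)`, the value of `L` comes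
first among the arguments of `p`. -/
structure IsJacodDensity (m : MeasurableSpace Ω) (P : Measure[m0] Ω) (L : Ω → β) (ν : Measure β)
    (p : β → Ω → ℝ) : Prop where
  nonneg : ∀ x ω, 0 ≤ p x ω
  measurable : Measurable[m.prod mβ] fun q : Ω × β => p q.2 q.1
  condExp_comp : ∀ f : β → ℝ, Measurable f → (∃ C, ∀ x, |f x| ≤ C) →
    P[fun ω => f (L ω) | m] =ᵐ[P] fun ω => ∫ x, f x * p x ω ∂ν

namespace IsJacodDensity

lemma measurable_ofReal (h : IsJacodDensity m P L ν p) :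
    Measurable[m.prod mβ] fun q : Ω × β => ENNReal.ofReal (p q.2 q.1) :=
  h.measurable.ennreal_ofReal

lemma ae_integrable [IsFiniteMeasure P] (h : IsJacodDensity m P L ν p) (hm : m ≤ m0) :
    ∀ᵐ ω ∂P, Integrable (fun x => p x ω) ν := by
  have hmass := h.condExp_comp (fun _ => 1) measurable_const ⟨1, by simp⟩
  simp only [one_mul, condExp_const hm] at hmass
  filter_upwards [hmass] with ω hω
  exact .of_integral_ne_zero (hω ▸ one_ne_zero)

lemma condLExp_indicator [IsFiniteMeasure P] (h : IsJacodDensity m P L ν p) (hm : m ≤ m0)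
    (hL : Measurable L) {t : Set β} (ht : MeasurableSet t) :
    P⁻[(L ⁻¹' t).indicator 1 | m] =ᵐ[P] fun ω => ∫⁻ x in t, .ofReal (p x ω) ∂ν := by
  set f : β → ℝ := t.indicator 1
  have hf_bdd : ∀ x, |f x| ≤ 1 := fun x => by by_cases hx : x ∈ t <;> simp [f, hx]
  have hf : Measurable f := measurable_one.indicator ht
  have hfL : Integrable (fun ω => f (L ω)) P :=
    .of_bound (hf.comp hL).aestronglyMeasurable 1 (.of_forall fun ω => hf_bdd (L ω))
  have hind : (fun ω => ENNReal.ofReal (f (L ω))) = (L ⁻¹' t).indicator 1 := by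
    ext ω
    by_cases hω : L ω ∈ t <;> simp [f, hω]
  rw [← hind]
  filter_upwards [condLExp_ofReal m hfL
    (.of_forall fun ω => indicator_nonneg (fun _ _ => zero_le_one) (L ω)),
    h.condExp_comp f hf ⟨1, hf_bdd⟩, h.ae_integrable hm] with ω hω hfω hpω
  have hfp : (fun x => f x * p x ω) = t.indicator fun x => p x ω := by
    ext x
    by_cases hx : x ∈ t <;> simp [f, hx]
  rw [hω, hfω, hfp, integral_indicator ht,
    ofReal_integral_eq_lintegral_ofReal hpω.integrableOn (.of_forall fun x => h.nonneg x ω)]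

lemma measure_inter_preimage [IsFiniteMeasure P] (h : IsJacodDensity m P L ν p) (hm : m ≤ m0)
    (hL : Measurable L) {s : Set Ω} (hs : MeasurableSet[m] s) {t : Set β} (ht : MeasurableSet t) :
    P (s ∩ L ⁻¹' t) = ∫⁻ ω in s, ∫⁻ x in t, .ofReal (p x ω) ∂ν ∂P := by
  rw [← setLIntegral_congr_fun_ae (hm s hs)
      ((h.condLExp_indicator hm hL ht).mono fun _ hω _ => hω),
    setLIntegral_condLExp hm P _ hs, lintegral_indicator_one (hL ht),
    Measure.restrict_apply (hL ht), inter_comm]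

lemma lintegral_graph [IsFiniteMeasure P] [SFinite ν] (h : IsJacodDensity m P L ν p)
    (hm : m ≤ m0) (hL : Measurable L) {g : Ω × β → ℝ≥0∞} (hg : Measurable[m.prod mβ] g) :
    ∫⁻ ω, g (ω, L ω) ∂P = ∫⁻ x, ∫⁻ ω, .ofReal (p x ω) * g (ω, x) ∂P ∂ν :=
  @lintegral_prodMk_eq Ω Ω β m0 m mβ P _ ν _ id L _ (measurable_id'' hm) hL h.measurable_ofReal
    (fun _ _ hs ht => h.measure_inter_preimage hm hL hs ht) g hg

lemma setLIntegral_graph [IsFiniteMeasure P] [SFinite ν] (h : IsJacodDensity m P L ν p)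
    (hm : m ≤ m0) (hL : Measurable L) {g : Ω × β → ℝ≥0∞} (hg : Measurable[m.prod mβ] g)
    {S : Set (Ω × β)} (hS : MeasurableSet[m.prod mβ] S) :
    ∫⁻ ω in {ω | (ω, L ω) ∈ S}, g (ω, L ω) ∂P =
      ∫⁻ x, ∫⁻ ω in {ω | (ω, x) ∈ S}, .ofReal (p x ω) * g (ω, x) ∂P ∂ν := by
  have hS_graph := sup_le hm hL.comap_le _ (measurableSet_preimage_graph L hS)
  have hgraph := h.lintegral_graph hm hL (hg.indicator hS)
  rw [← lintegral_indicator hS_graph]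
  refine hgraph.trans (lintegral_congr fun x => ?_)
  rw [← lintegral_indicator (hm _ (measurableSet_section hS x))]
  congr 1 with ω
  by_cases hω : (ω, x) ∈ S <;> simp [hω]

lemma ae_mem_graph [IsFiniteMeasure P] [SFinite ν] (h : IsJacodDensity m P L ν p)
    (hm : m ≤ m0) (hL : Measurable L) {S : Set (Ω × β)} (hS : MeasurableSet[m.prod mβ] S)
    (hS_ae : ∀ᵐ x ∂ν, ∀ᵐ ω ∂P, (ω, x) ∈ S) : ∀ᵐ ω ∂P, (ω, L ω) ∈ S := by
  have hcompl := h.setLIntegral_graph hm hL (g := 1) measurable_const hS.compl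
  have hnull : ∀ᵐ x ∂ν, ∫⁻ ω in {ω | (ω, x) ∈ Sᶜ}, .ofReal (p x ω) * 1 ∂P = 0 :=
    hS_ae.mono fun x hx => setLIntegral_measure_zero _ _ hx
  simp only [Pi.one_apply, setLIntegral_one] at hcompl
  exact hcompl.trans (lintegral_eq_zero_of_ae_eq_zero hnull)

lemma measurableSet_pos (h : IsJacodDensity m P L ν p) :
    MeasurableSet[m.prod mβ] {q : Ω × β | 0 < p q.2 q.1} :=
  measurableSet_lt measurable_const h.measurable

lemma ae_pos [IsFiniteMeasure P] [SFinite ν] (h : IsJacodDensity m P L ν p)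
    (hm : m ≤ m0) (hL : Measurable L) : ∀ᵐ ω ∂P, 0 < p (L ω) ω := by
  have hcompl := h.setLIntegral_graph hm hL (g := 1) measurable_const h.measurableSet_pos.compl
  have hnull (x : β) :
      ∫⁻ ω in {ω | (ω, x) ∈ {q : Ω × β | 0 < p q.2 q.1}ᶜ}, .ofReal (p x ω) * 1 ∂P = 0 := by
    rw [setLIntegral_congr_fun (g := 0)
      (hm _ (measurableSet_section h.measurableSet_pos.compl x)) fun ω hω => ?_]
    · simp
    · simpa using hω
  simp only [Pi.one_apply, setLIntegral_one, hnull, lintegral_zero] at hcompl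
  exact hcompl

theorem condLExp_comp_graph [IsFiniteMeasure P] [SFinite ν] (h : IsJacodDensity m P L ν p)
    (h' : IsJacodDensity m' P L ν p') (hmm' : m ≤ m') (hm' : m' ≤ m0) (hL : Measurable L)
    {f V : Ω × β → ℝ≥0∞} (hf : Measurable[m'.prod mβ] f) (hV : Measurable[m.prod mβ] V)
    (hVf : ∀ᵐ x ∂ν, (fun ω => V (ω, x)) =ᵐ[P] P⁻[fun ω => .ofReal (p' x ω) * f (ω, x) | m]) :
    P⁻[fun ω => f (ω, L ω) | m ⊔ mβ.comap L] =ᵐ[P] fun ω => V (ω, L ω) / .ofReal (p (L ω) ω) := by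
  have hm : m ≤ m0 := hmm'.trans hm'
  have hquot : Measurable[m.prod mβ] fun q : Ω × β => V q / .ofReal (p q.2 q.1) :=
    hV.div h.measurable_ofReal
  refine (ae_eq_condLExp (sup_le hm hL.comap_le) P _ (measurable_comp_graph L hquot)
    fun A hA => ?_).symm
  obtain ⟨S, hS, rfl⟩ := (comap_graph m L).symm ▸ hA
  -- `V / p` cancels against `p` only where `p > 0`, a set almost surely containing `(ω, L ω)`.
  set T := S ∩ {q | 0 < p q.2 q.1}
  have hT : MeasurableSet[m.prod mβ] T := hS.inter h.measurableSet_pos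
  have hST : {ω | (ω, L ω) ∈ S} =ᵐ[P] {ω | (ω, L ω) ∈ T} := by
    filter_upwards [h.ae_pos hm hL] with ω hω
    exact propext ⟨fun hS => ⟨hS, hω⟩, And.left⟩
  have hcancel (x : β) :
      ∫⁻ ω in {ω | (ω, x) ∈ T}, .ofReal (p x ω) * (V (ω, x) / .ofReal (p x ω)) ∂P =
        ∫⁻ ω in {ω | (ω, x) ∈ T}, V (ω, x) ∂P := by
    refine setLIntegral_congr_fun (hm _ (measurableSet_section hT x)) fun ω hω => ?_
    exact ENNReal.mul_div_cancel (ENNReal.ofReal_pos.2 hω.2).ne' ENNReal.ofReal_ne_top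
  calc
    _ = ∫⁻ ω in {ω | (ω, L ω) ∈ T}, V (ω, L ω) / .ofReal (p (L ω) ω) ∂P :=
      setLIntegral_congr hST
    _ = ∫⁻ x, ∫⁻ ω in {ω | (ω, x) ∈ T}, V (ω, x) ∂P ∂ν := by
      rw [h.setLIntegral_graph hm hL hquot hT]
      exact lintegral_congr hcancel
    _ = ∫⁻ x, ∫⁻ ω in {ω | (ω, x) ∈ T}, .ofReal (p' x ω) * f (ω, x) ∂P ∂ν := by
      refine lintegral_congr_ae (hVf.mono fun x hx => ?_)
      have hTx := measurableSet_section hT x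
      exact (setLIntegral_congr_fun_ae (hm _ hTx) (hx.mono fun _ hω _ => hω)).trans
        (setLIntegral_condLExp hm P _ hTx)
    _ = ∫⁻ ω in {ω | (ω, L ω) ∈ T}, f (ω, L ω) ∂P :=
      (h'.setLIntegral_graph hm' hL hf (measurableSpace_prod_mono_left hmm' _ hT)).symm
    _ = _ := (setLIntegral_congr hST).symm

lemma ae_integrable_section [IsFiniteMeasure P] [SFinite ν] (h : IsJacodDensity m P L ν p)
    (hm : m ≤ m0) (hL : Measurable L) {f : Ω × β → ℝ} (hf : Measurable[m.prod mβ] f)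
    (hfL : Integrable (fun ω => f (ω, L ω)) P) :
    ∀ᵐ x ∂ν, Integrable (fun ω => p x ω * f (ω, x)) P := by
  have hpf : Measurable fun q : Ω × β => p q.2 q.1 * f q :=
    (h.measurable.mul hf).mono (measurableSpace_prod_mono_left hm) le_rfl
  have hfinite : ∫⁻ x, ∫⁻ ω, ‖p x ω * f (ω, x)‖ₑ ∂P ∂ν ≠ ∞ := by
    have hfL_enorm := h.lintegral_graph hm hL (measurable_enorm.comp hf) ▸ hfL.2.ne
    simpa only [enorm_mul, Real.enorm_of_nonneg (h.nonneg _ _), Function.comp_apply]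
      using hfL_enorm
  filter_upwards [ae_lt_top hpf.enorm.lintegral_prod_left' hfinite] with x hx
  exact ⟨(measurable_section hpf x).aestronglyMeasurable, hx⟩

theorem condExp_comp_graph [IsFiniteMeasure P] [SFinite ν] (h : IsJacodDensity m P L ν p)
    (h' : IsJacodDensity m' P L ν p') (hmm' : m ≤ m') (hm' : m' ≤ m0) (hL : Measurable L)
    {f v : Ω × β → ℝ} (hf : Measurable[m'.prod mβ] f)
    (hfL : Integrable (fun ω => f (ω, L ω)) P) (hv : Measurable[m.prod mβ] v)
    (hvf : ∀ᵐ x ∂ν, (fun ω => v (ω, x)) =ᵐ[P] P[fun ω => p' x ω * f (ω, x) | m]) :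
    P[fun ω => f (ω, L ω) | m ⊔ mβ.comap L] =ᵐ[P] fun ω => v (ω, L ω) / p (L ω) ω := by
  have hm : m ≤ m0 := hmm'.trans hm'
  have exists_version {g : Ω × β → ℝ} (hg : Measurable[m'.prod mβ] g) :
      ∃ V, IsSectionwiseCondLExp m P (fun q => .ofReal (p' q.2 q.1 * g q)) V :=
    exists_isSectionwiseCondLExp hm
      ((h'.measurable.mul hg).ennreal_ofReal.mono (measurableSpace_prod_mono_left hm') le_rfl)
  have bayes {g : Ω × β → ℝ} (hg : Measurable[m'.prod mβ] g) {V : Ω × β → ℝ≥0∞}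
      (hV : IsSectionwiseCondLExp m P (fun q => .ofReal (p' q.2 q.1 * g q)) V) :
      P⁻[fun ω => .ofReal (g (ω, L ω)) | m ⊔ mβ.comap L] =ᵐ[P]
        fun ω => V (ω, L ω) / .ofReal (p (L ω) ω) :=
    h.condLExp_comp_graph h' hmm' hm' hL hg.ennreal_ofReal hV.measurable
      (.of_forall fun x => by simpa only [ENNReal.ofReal_mul (h'.nonneg _ _)] using hV.ae_eq x)
  obtain ⟨Vpos, hVpos⟩ := exists_version hf
  obtain ⟨Vneg, hVneg⟩ := exists_version hf.neg
  have hv_eq : ∀ᵐ ω ∂P, v (ω, L ω) = (Vpos (ω, L ω)).toReal - (Vneg (ω, L ω)).toReal := by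
    refine h.ae_mem_graph hm hL (measurableSet_eq_fun hv
      (hVpos.measurable.ennreal_toReal.sub hVneg.measurable.ennreal_toReal)) ?_
    filter_upwards [hvf, h'.ae_integrable_section hm' hL hf hfL] with x hvx hfx
    filter_upwards [hvx, hVpos.ae_eq x, hVneg.ae_eq x, toReal_condLExp_ofReal_sub m hfx]
      with ω hv hpos hneg hsub
    simp only [Pi.neg_apply, mul_neg] at hneg
    simp only [Pi.sub_apply, hv, hpos, hneg, hsub]
  filter_upwards [toReal_condLExp_ofReal_sub (m ⊔ mβ.comap L) hfL, bayes hf hVpos,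
    bayes hf.neg hVneg, hv_eq] with ω hsub hpos hneg hv
  simp only [Pi.neg_apply] at hneg
  rw [← hsub, hpos, hneg, hv, ENNReal.toReal_div, ENNReal.toReal_div,
    ENNReal.toReal_ofReal (h.nonneg _ _), sub_div]

end IsJacodDensity

end JacodDensity

theorem full_information_pricing_kernel_general {Ω β : Type*} {m m' m0 : MeasurableSpace Ω}
    [mβ : MeasurableSpace β] {P : Measure[m0] Ω} [IsFiniteMeasure P] {L : Ω → β}
    {ν : Measure β} [SFinite ν] {p p' : β → Ω → ℝ} (hmm' : m ≤ m') (hm' : m' ≤ m0)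
    (hL : Measurable L) (h : IsJacodDensity m P L ν p) (h' : IsJacodDensity m' P L ν p')
    {f : Ω × β → ℝ} (hf : Measurable[m'.prod mβ] f) (hfL : Integrable (fun ω => f (ω, L ω)) P) :
    (∃ v : Ω × β → ℝ, Measurable[m.prod mβ] v ∧
      ∀ᵐ x ∂ν, (fun ω => v (ω, x)) =ᵐ[P] P[fun ω => p' x ω * f (ω, x) | m]) ∧
    ∀ v : Ω × β → ℝ, Measurable[m.prod mβ] v →
      (∀ᵐ x ∂ν, (fun ω => v (ω, x)) =ᵐ[P] P[fun ω => p' x ω * f (ω, x) | m]) →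
      P[fun ω => f (ω, L ω) | m ⊔ mβ.comap L] =ᵐ[P] fun ω => v (ω, L ω) / p (L ω) ω :=
  ⟨exists_measurable_section_ae_eq_condExp (hmm'.trans hm')
      ((h'.measurable.mul hf).mono (measurableSpace_prod_mono_left hm') le_rfl)
      (h'.ae_integrable_section hm' hL hf hfL),
    fun _ hv hvf => h.condExp_comp_graph h' hmm' hm' hL hf hfL hv hvf⟩

/-- **Proposition 3.1.** Under Jacod's density hypothesis, for all `0 ≤ t ≤ θ` and every
bounded nonnegative `F_θ ⊗ B(ℝ)`-measurable function `φ_θ`, there exists an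
`F_t ⊗ B(ℝ)`-measurable function `v` such that for `P^L`-a.e. `x`, `v(·,x)` is a version of
`E_P[φ_θ(·,x) p_θ(x) 1_{X*_θ > x} | F_t]`; and for every such `v`, `P`-a.s.,
`E_P[φ_θ(·,L) 1_{τ > θ} | G^M_t] = v(·,L)/p_t(L)`. -/
theorem full_information_pricing_kernel
    {Ω : Type*} [m0 : MeasurableSpace Ω] {P : Measure Ω} [IsProbabilityMeasure P]
    (F : Filtration ℝ≥0 m0)
    (X : ℝ≥0 → Ω → ℝ) (hX_adapted : Adapted F X)
    (hX_cont : ∀ ω, Continuous fun s => X s ω)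
    (L : Ω → ℝ) (hL : Measurable L)
    (hX0 : ∀ᵐ ω ∂P, L ω < X 0 ω)
    (τ : Ω → ℝ≥0)
    (hτ : ∀ (θ : ℝ≥0) (ω : Ω), θ < τ ω ↔ L ω < runInf X θ ω)
    -- Jacod's density hypothesis
    (p : ℝ≥0 → ℝ → Ω → ℝ)
    (hp_nonneg : ∀ t x ω, 0 ≤ p t x ω)
    (hp_meas : ∀ t, Measurable[(F t).prod inferInstance] fun q : Ω × ℝ => p t q.2 q.1)
    (hp_pos : ∀ t, ∀ᵐ ω ∂P, 0 < p t (L ω) ω)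
    (hp_density : ∀ (t : ℝ≥0) (f : ℝ → ℝ), Measurable f → (∃ C, ∀ x, |f x| ≤ C) →
      (P[fun ω => f (L ω)|F t]) =ᵐ[P] fun ω => ∫ x, f x * p t x ω ∂(P.map L))
    -- times and payoff
    (t θ : ℝ≥0) (htθ : t ≤ θ)
    (φ : Ω × ℝ → ℝ)
    (hφ_meas : Measurable[(F θ).prod inferInstance] φ)
    (hφ_nonneg : ∀ q, 0 ≤ φ q)
    (hφ_bdd : ∃ C, ∀ q, |φ q| ≤ C) :
    (∃ v : Ω × ℝ → ℝ, Measurable[(F t).prod inferInstance] v ∧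
      ∀ᵐ x ∂(P.map L), (fun ω => v (ω, x)) =ᵐ[P]
        P[fun ω => φ (ω, x) * p θ x ω * (if x < runInf X θ ω then 1 else 0)|F t]) ∧
    ∀ v : Ω × ℝ → ℝ, Measurable[(F t).prod inferInstance] v →
      (∀ᵐ x ∂(P.map L), (fun ω => v (ω, x)) =ᵐ[P]
        P[fun ω => φ (ω, x) * p θ x ω * (if x < runInf X θ ω then 1 else 0)|F t]) →
      (P[fun ω => φ (ω, L ω) *
          (if θ < τ ω then 1 else 0)|F t ⊔ MeasurableSpace.comap L inferInstance])
        =ᵐ[P] fun ω => v (ω, L ω) / p t (L ω) ω := by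
  obtain ⟨C, hC⟩ := hφ_bdd
  have hJacod (s : ℝ≥0) : IsJacodDensity (F s) P L (P.map L) (p s) :=
    ⟨hp_nonneg s, hp_meas s, hp_density s⟩
  set f : Ω × ℝ → ℝ := fun q => φ q * if q.2 < runInf X θ q.1 then 1 else 0
  have hf : Measurable[(F θ).prod inferInstance] f :=
    hφ_meas.mul <| .ite (measurableSet_lt_runInf hX_adapted hX_cont θ) measurable_const
      measurable_const
  have hf_bdd (q : Ω × ℝ) : ‖f q‖ ≤ C := by
    refine le_trans ?_ (hC q)
    by_cases hq : q.2 < runInf X θ q.1 <;> simp [f, hq]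
  have hfL : Integrable (fun ω => f (ω, L ω)) P := .of_bound
    ((measurable_comp_graph L hf).mono (sup_le (F.le θ) hL.comap_le) le_rfl).aestronglyMeasurable
    C (.of_forall fun ω => hf_bdd (ω, L ω))
  have hpf (x : ℝ) (ω : Ω) :
      φ (ω, x) * p θ x ω * (if x < runInf X θ ω then 1 else 0) = p θ x ω * f (ω, x) := by
    rw [mul_comm (φ _), mul_assoc]
  simp only [hpf, hτ]
  exact full_information_pricing_kernel_general (F.mono htθ) (F.le θ) hL (hJacod t)
    (hJacod θ) hf hfL
end
end

section
/- Under Jacod's density hypothesis, suppose ε_t is a real random variable independent of F_∞ ∨ σ(L) whose law has density q_t with respect to Lebesgue measure, and set L_t := L + ε_t. Then for every bounded F_t ⊗ B(ℝ²)-measurable function H : Ω × ℝ × ℝ → ℝ, the random variable ∫_ℝ q_t(L_t − l) p_t(l) P^L(dl) is P-a.s. strictly positive and, P-almost surely, E_P[H(·, L, L_t) | F_t ∨ σ(L_t)] = ( ∫_ℝ H(·, l, L_t) q_t(L_t − l) p_t(l) P^L(dl) ) / ( ∫_ℝ q_t(L_t − l) p_t(l) P^L(dl) ). (The Bayes-type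 formula (5.6) established in the proof of Proposition 5.1.) -/
open MeasureTheory ProbabilityTheory Set
open scoped NNReal Classical

noncomputable section

open scoped ENNReal

/-!
By Jacod's hypothesis and independence of the noise, `L` has conditional density `p_t` given `F_t`
(the prior), and `L + ε` has conditional density `y ↦ q (y - L)` given `F_t ∨ σ(L)` (the
likelihood). The product of the two is a joint density of `((ω, L + ε), L)` with respect to a
product measure, and conditioning on the first component means dividing this density by its
integral over `l`. The σ-algebra `F_t` is treated as the one generated by the identity map
`Ω → (Ω, F_t)`, so that conditional densities are statements about laws of pairs.
-/

/-- `HasCondDensity P X Y μ k` says that the conditional law of `Y` given `X` under `P` has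
density `k (X, ·)` with respect to `μ`. It is encoded through the joint law of `(X, Y)`, so that
`k` need only be determined almost everywhere and no regular conditional law has to exist. -/
structure HasCondDensity {Ω 𝓧 𝓨 : Type*} [MeasurableSpace Ω] [m𝓧 : MeasurableSpace 𝓧]
    [MeasurableSpace 𝓨] (P : Measure Ω) (X : Ω → 𝓧) (Y : Ω → 𝓨) (μ : Measure 𝓨)
    (k : 𝓧 × 𝓨 → ℝ≥0∞) : Prop where
  measurable : Measurable k
  map_prodMk : P.map (fun ω => (X ω, Y ω)) = ((P.map X).prod μ).withDensity k

section ProductMeasures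

variable {𝓧 𝓨 𝓩 : Type*} [MeasurableSpace 𝓧] [MeasurableSpace 𝓨] [MeasurableSpace 𝓩]
  {ν : Measure 𝓧} {μ : Measure 𝓨} {κ : Measure 𝓩}

theorem map_withDensity_comp_of_measurePreserving {f : 𝓧 → 𝓨} (hf : MeasurePreserving f ν μ)
    {k : 𝓨 → ℝ≥0∞} (hk : Measurable k) :
    (ν.withDensity fun x => k (f x)).map f = μ.withDensity k := by
  ext s hs
  rw [Measure.map_apply hf.measurable hs, withDensity_apply _ (hf.measurable hs),
    withDensity_apply _ hs, ← hf.map_eq, setLIntegral_map hs hk hf.measurable]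

theorem measurePreserving_prod_right_comm (ν : Measure 𝓧) (μ : Measure 𝓨) (κ : Measure 𝓩)
    [SFinite ν] [SFinite μ] [SFinite κ] :
    MeasurePreserving (fun z : (𝓧 × 𝓨) × 𝓩 => ((z.1.1, z.2), z.1.2))
      ((ν.prod μ).prod κ) ((ν.prod κ).prod μ) :=
  (measurePreserving_prodAssoc ν κ μ).symm.comp
    (((MeasurePreserving.id ν).prod Measure.measurePreserving_swap).comp
      (measurePreserving_prodAssoc ν μ κ))

theorem fst_withDensity_prod [SFinite ν] [SFinite μ] {g : 𝓧 × 𝓨 → ℝ≥0∞} (hg : Measurable g) :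
    ((ν.prod μ).withDensity g).fst = ν.withDensity fun x => ∫⁻ y, g (x, y) ∂μ := by
  ext s hs
  rw [Measure.fst_apply hs, ← prod_univ, withDensity_apply _ (hs.prod .univ),
    withDensity_apply _ hs, setLIntegral_prod _ (by fun_prop)]
  simp only [setLIntegral_univ]

theorem map_eq_withDensity_lintegral [SFinite ν] [SFinite μ] {Ω : Type*} [MeasurableSpace Ω]
    {P : Measure Ω} {X : Ω → 𝓧} {Y : Ω → 𝓨} (hY : Measurable Y) {g : 𝓧 × 𝓨 → ℝ≥0∞}
    (hg : Measurable g) (hXY : P.map (fun ω => (X ω, Y ω)) = (ν.prod μ).withDensity g) :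
    P.map X = ν.withDensity fun x => ∫⁻ y, g (x, y) ∂μ := by
  rw [← Measure.fst_map_prodMk hY, hXY, fst_withDensity_prod hg]

theorem ae_lintegral_prodMk_lt_top [SFinite μ] {g : 𝓧 × 𝓨 → ℝ≥0∞} (hg : Measurable g)
    (hg_ne_top : ∫⁻ z, g z ∂ν.prod μ ≠ ∞) : ∀ᵐ x ∂ν, ∫⁻ y, g (x, y) ∂μ < ∞ :=
  ae_lt_top (by fun_prop) (by rwa [← lintegral_prod _ (by fun_prop)])

theorem ae_eq_lintegral_mul_div_lintegral [SFinite μ] {g : 𝓧 × 𝓨 → ℝ≥0∞} (hg : Measurable g)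
    (hg_ne_top : ∫⁻ z, g z ∂ν.prod μ ≠ ∞) :
    g =ᵐ[ν.prod μ]
      (fun z => ∫⁻ y, g (z.1, y) ∂μ) * fun z => g z / ∫⁻ y, g (z.1, y) ∂μ := by
  refine (Measure.ae_prod_iff_ae_ae (measurableSet_eq_fun hg (by fun_prop))).2 ?_
  filter_upwards [ae_lintegral_prodMk_lt_top hg hg_ne_top] with x hlt
  by_cases hzero : ∫⁻ y, g (x, y) ∂μ = 0
  · filter_upwards [(lintegral_eq_zero_iff (by fun_prop)).1 hzero] with y hy
    simpa [hzero] using hy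
  · exact ae_of_all _ fun y => (ENNReal.mul_div_cancel hzero hlt.ne).symm

theorem integral_toReal_div_lintegral_smul {E : Type*} [NormedAddCommGroup E] [NormedSpace ℝ E]
    {g : 𝓧 → ℝ} (hg : AEStronglyMeasurable g ν) (hg_nonneg : ∀ x, 0 ≤ g x) (f : 𝓧 → E) :
    ∫ x, (ENNReal.ofReal (g x) / ∫⁻ x', ENNReal.ofReal (g x') ∂ν).toReal • f x ∂ν =
      (∫ x, g x ∂ν)⁻¹ • ∫ x, g x • f x ∂ν := by
  rw [integral_eq_lintegral_of_nonneg_ae (ae_of_all _ hg_nonneg) hg, ← integral_smul]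
  simp only [ENNReal.toReal_div, ENNReal.toReal_ofReal (hg_nonneg _), div_eq_inv_mul, mul_smul]

end ProductMeasures

theorem lintegral_ne_top_of_map_eq_withDensity {Ω 𝓧 : Type*} [MeasurableSpace Ω]
    [MeasurableSpace 𝓧] {P : Measure Ω} [IsFiniteMeasure P] {X : Ω → 𝓧} {ρ : Measure 𝓧}
    {g : 𝓧 → ℝ≥0∞} (h : P.map X = ρ.withDensity g) : ∫⁻ x, g x ∂ρ ≠ ∞ := by
  rw [← setLIntegral_univ, ← withDensity_apply _ .univ, ← h]
  exact measure_ne_top _ _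

theorem setIntegral_condExp_indicator_one {Ω : Type*} {m mΩ : MeasurableSpace Ω} {P : Measure Ω}
    [IsFiniteMeasure P] (hm : m ≤ mΩ) {s t : Set Ω} (hs : MeasurableSet[m] s)
    (ht : MeasurableSet t) : ∫ ω in s, (P⟦t | m⟧) ω ∂P = P.real (s ∩ t) := by
  rw [setIntegral_condExp hm ((integrable_const 1).indicator ht) hs, setIntegral_indicator ht]
  simp

theorem condExp_indicator_ae_eq_setIntegral {Ω 𝓨 : Type*} {m mΩ : MeasurableSpace Ω}
    [MeasurableSpace 𝓨] {P : Measure Ω} {Y : Ω → 𝓨} {μ : Measure 𝓨} {p : 𝓨 → Ω → ℝ}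
    (h : ∀ f : 𝓨 → ℝ, Measurable f → (∃ C, ∀ y, |f y| ≤ C) →
      P[fun ω => f (Y ω) | m] =ᵐ[P] fun ω => ∫ y, f y * p y ω ∂μ)
    {B : Set 𝓨} (hB : MeasurableSet B) :
    P⟦Y ⁻¹' B | m⟧ =ᵐ[P] fun ω => ∫ y in B, p y ω ∂μ := by
  have indicator_bdd : ∀ y, |B.indicator (1 : 𝓨 → ℝ) y| ≤ 1 := fun y => by
    by_cases hy : y ∈ B <;> simp [hy]
  simpa only [← integral_indicator hB, indicator_apply, Pi.one_apply, ite_mul, one_mul, zero_mul]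
    using! h (B.indicator 1) (measurable_one.indicator hB) ⟨1, indicator_bdd⟩

section CondDensity

variable {Ω 𝓧 𝓨 𝓩 E : Type*} [MeasurableSpace Ω] {m𝓧 : MeasurableSpace 𝓧} [MeasurableSpace 𝓨]
  [MeasurableSpace 𝓩] [NormedAddCommGroup E] [NormedSpace ℝ E] [CompleteSpace E]
  {P : Measure Ω} [IsFiniteMeasure P] {X : Ω → 𝓧} {Y : Ω → 𝓨} {Z : Ω → 𝓩}
  {ν : Measure 𝓧} {μ : Measure 𝓨} {κ : Measure 𝓩}

theorem hasCondDensity_of_condExp_indicator_ae_eq [SFinite μ] (hX : Measurable X)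
    (hY : Measurable Y) {p : 𝓧 × 𝓨 → ℝ} (hp : Measurable p) (hp_nonneg : ∀ z, 0 ≤ p z)
    (hXY : ∀ B, MeasurableSet B →
      P⟦Y ⁻¹' B | MeasurableSpace.comap X m𝓧⟧ =ᵐ[P]
        fun ω => ∫ y in B, p (X ω, y) ∂μ) :
    HasCondDensity P X Y μ fun z => ENNReal.ofReal (p z) := by
  have section_integrable : ∀ᵐ ω ∂P, Integrable (fun y => p (X ω, y)) μ := by
    filter_upwards [hXY univ .univ] with ω hω
    refine not_imp_comm.1 integral_undef ?_
    rw [← setIntegral_univ, ← hω]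
    simp [condExp_const hX.comap_le]
  refine ⟨hp.ennreal_ofReal, Measure.ext_prod fun {A B} hA hB => ?_⟩
  have condProb_nonneg : 0 ≤ᵐ[P] P⟦Y ⁻¹' B | MeasurableSpace.comap X m𝓧⟧ :=
    condExp_nonneg (ae_of_all _ (indicator_nonneg fun _ _ => zero_le_one))
  calc P.map (fun ω => (X ω, Y ω)) (A ×ˢ B)
      = ENNReal.ofReal (P.real (X ⁻¹' A ∩ Y ⁻¹' B)) := by
        rw [ofReal_measureReal, Measure.map_apply (by fun_prop) (hA.prod hB), mk_preimage_prod]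
    _ = ∫⁻ ω in X ⁻¹' A,
          ENNReal.ofReal ((P⟦Y ⁻¹' B | MeasurableSpace.comap X m𝓧⟧) ω) ∂P := by
        rw [← setIntegral_condExp_indicator_one hX.comap_le ⟨A, hA, rfl⟩ (hY hB),
          ofReal_integral_eq_lintegral_ofReal integrable_condExp.integrableOn
            (ae_restrict_of_ae condProb_nonneg)]
    _ = ∫⁻ ω in X ⁻¹' A, ∫⁻ y in B, ENNReal.ofReal (p (X ω, y)) ∂μ ∂P := by
        refine lintegral_congr_ae (ae_restrict_of_ae ?_)
        filter_upwards [hXY B hB, section_integrable] with ω hω hint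
        rw [hω, ofReal_integral_eq_lintegral_ofReal hint.integrableOn
          (ae_of_all _ fun y => hp_nonneg _)]
    _ = ((P.map X).prod μ).withDensity (fun z => ENNReal.ofReal (p z)) (A ×ˢ B) := by
        rw [withDensity_apply _ (hA.prod hB), ← Measure.prod_restrict,
          lintegral_prod _ (by fun_prop), setLIntegral_map hA (by fun_prop) hX]

theorem hasCondDensity_add_of_indepFun {G : Type*} [AddCommGroup G] [MeasurableSpace G]
    [MeasurableAdd₂ G] [MeasurableSub₂ G] {κ : Measure G} [SFinite κ] [κ.IsAddLeftInvariant]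
    {ε : Ω → G} (hX : Measurable X) (hε : Measurable ε) (hXε : IndepFun X ε P) {q : G → ℝ≥0∞}
    (hq : Measurable q) (hεq : P.map ε = κ.withDensity q) {f : 𝓧 → G} (hf : Measurable f) :
    HasCondDensity P X (fun ω => f (X ω) + ε ω) κ fun z => q (z.2 - f z.1) := by
  have shear : MeasurePreserving (fun z : 𝓧 × G => (z.1, f z.1 + z.2))
      ((P.map X).prod κ) ((P.map X).prod κ) :=
    (MeasurePreserving.id _).skew_product (by fun_prop)
      (ae_of_all _ fun x => map_add_left_eq_self κ (f x))
  refine ⟨by fun_prop, ?_⟩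
  calc P.map (fun ω => (X ω, f (X ω) + ε ω))
      = (P.map fun ω => (X ω, ε ω)).map (fun z => (z.1, f z.1 + z.2)) := by
        rw [Measure.map_map shear.measurable (by fun_prop)]; rfl
    _ = (((P.map X).prod κ).withDensity fun z => q z.2).map (fun z => (z.1, f z.1 + z.2)) := by
        rw [(indepFun_iff_map_prod_eq_prod_map_map hX.aemeasurable hε.aemeasurable).1 hXε, hεq,
          prod_withDensity_right hq]
    _ = ((P.map X).prod κ).withDensity (fun z => q (z.2 - f z.1)) := by
        simpa only [add_sub_cancel_left] using
          map_withDensity_comp_of_measurePreserving shear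
            (k := fun z => q (z.2 - f z.1)) (by fun_prop)

namespace HasCondDensity

theorem condExp_ae_eq [SFinite μ] {k : 𝓧 × 𝓨 → ℝ≥0∞} (h : HasCondDensity P X Y μ k)
    (hX : Measurable X) (hY : Measurable Y) {f : 𝓧 × 𝓨 → E} (hf : StronglyMeasurable f)
    (hf_int : Integrable (fun ω => f (X ω, Y ω)) P) :
    P[fun ω => f (X ω, Y ω) | MeasurableSpace.comap X m𝓧] =ᵐ[P]
      fun ω => ∫ y, (k (X ω, y)).toReal • f (X ω, y) ∂μ := by
  have k_lt_top : ∀ᵐ z ∂(P.map X).prod μ, k z < ∞ :=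
    ae_lt_top h.measurable (lintegral_ne_top_of_map_eq_withDensity h.map_prodMk)
  have kf_int : Integrable (fun z => (k z).toReal • f z) ((P.map X).prod μ) := by
    rw [← integrable_withDensity_iff_integrable_smul' h.measurable k_lt_top, ← h.map_prodMk]
    exact (integrable_map_measure hf.aestronglyMeasurable (by fun_prop)).2 hf_int
  have integral_meas : StronglyMeasurable fun x => ∫ y, (k (x, y)).toReal • f (x, y) ∂μ :=
    (h.measurable.ennreal_toReal.stronglyMeasurable.smul hf).integral_prod_right'
  refine (ae_eq_condExp_of_forall_setIntegral_eq hX.comap_le hf_int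
    (fun s _ _ => (kf_int.integral_prod_left.comp_measurable hX).integrableOn) ?_
    (integral_meas.comp_measurable (comap_measurable X)).aestronglyMeasurable).symm
  rintro _ ⟨S, hS, rfl⟩ -
  calc ∫ ω in X ⁻¹' S, ∫ y, (k (X ω, y)).toReal • f (X ω, y) ∂μ ∂P
      = ∫ x in S, ∫ y, (k (x, y)).toReal • f (x, y) ∂μ ∂P.map X :=
        (setIntegral_map hS integral_meas.aestronglyMeasurable hX.aemeasurable).symm
    _ = ∫ z in S ×ˢ univ, (k z).toReal • f z ∂(P.map X).prod μ := by
        simp only [setIntegral_prod _ kf_int.integrableOn, setIntegral_univ]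
    _ = ∫ z in S ×ˢ univ, f z ∂P.map (fun ω => (X ω, Y ω)) := by
        rw [h.map_prodMk, setIntegral_withDensity_eq_setIntegral_toReal_smul h.measurable
          (ae_restrict_of_ae k_lt_top) _ (hS.prod .univ)]
    _ = ∫ ω in X ⁻¹' S, f (X ω, Y ω) ∂P := by
        rw [setIntegral_map (hS.prod .univ) hf.aestronglyMeasurable (by fun_prop),
          mk_preimage_prod, preimage_univ, inter_univ]

theorem map_prodMk_right_comm [SFinite μ] [SFinite κ] (hX : Measurable X) (hY : Measurable Y)
    (hZ : Measurable Z) {k : 𝓧 × 𝓨 → ℝ≥0∞} {q : (𝓧 × 𝓨) × 𝓩 → ℝ≥0∞}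
    (prior : HasCondDensity P X Y μ k)
    (likelihood : HasCondDensity P (fun ω => (X ω, Y ω)) Z κ q) :
    P.map (fun ω => ((X ω, Z ω), Y ω)) = (((P.map X).prod κ).prod μ).withDensity
      fun z => q ((z.1.1, z.2), z.1.2) * k (z.1.1, z.2) := by
  have hk := prior.measurable
  have hq := likelihood.measurable
  have : SFinite (((P.map X).prod μ).withDensity k) := by
    rw [← prior.map_prodMk]; infer_instance
  have joint : P.map (fun ω => ((X ω, Y ω), Z ω)) =
      (((P.map X).prod μ).prod κ).withDensity fun z => q z * k z.1 := by
    rw [likelihood.map_prodMk, prior.map_prodMk, prod_withDensity_left hk,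
      ← withDensity_mul _ (by fun_prop) hq, mul_comm]
    rfl
  have exchange := measurePreserving_prod_right_comm (P.map X) μ κ
  rw [← map_withDensity_comp_of_measurePreserving exchange (by fun_prop), ← joint,
    Measure.map_map exchange.measurable (by fun_prop)]
  rfl

end HasCondDensity

section JointDensity

variable [SFinite ν] [SFinite μ]

theorem hasCondDensity_div_lintegral (hY : Measurable Y) {g : 𝓧 × 𝓨 → ℝ≥0∞} (hg : Measurable g)
    (hXY : P.map (fun ω => (X ω, Y ω)) = (ν.prod μ).withDensity g) :
    HasCondDensity P X Y μ fun z => g z / ∫⁻ y, g (z.1, y) ∂μ := by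
  have marginal := map_eq_withDensity_lintegral hY hg hXY
  have quotient_meas : Measurable fun z : 𝓧 × 𝓨 => g z / ∫⁻ y, g (z.1, y) ∂μ := by fun_prop
  have : SFinite (ν.withDensity fun x => ∫⁻ y, g (x, y) ∂μ) := by
    rw [← marginal]; infer_instance
  refine ⟨quotient_meas, ?_⟩
  rw [hXY, withDensity_congr_ae (ae_eq_lintegral_mul_div_lintegral hg
      (lintegral_ne_top_of_map_eq_withDensity hXY)),
    withDensity_mul _ (by fun_prop) quotient_meas, marginal, prod_withDensity_left (by fun_prop)]

variable {g : 𝓧 × 𝓨 → ℝ}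

theorem ae_integral_pos_of_map_eq_withDensity (hX : Measurable X) (hY : Measurable Y)
    (hg : Measurable g) (hg_nonneg : ∀ z, 0 ≤ g z)
    (hXY : P.map (fun ω => (X ω, Y ω)) = (ν.prod μ).withDensity fun z => ENNReal.ofReal (g z)) :
    ∀ᵐ ω ∂P, 0 < ∫ y, g (X ω, y) ∂μ := by
  refine ae_of_ae_map (p := fun x => 0 < ∫ y, g (x, y) ∂μ) hX.aemeasurable ?_
  rw [map_eq_withDensity_lintegral hY (by fun_prop) hXY, ae_withDensity_iff (by fun_prop)]
  filter_upwards [ae_lintegral_prodMk_lt_top (by fun_prop)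
    (lintegral_ne_top_of_map_eq_withDensity hXY)] with x hlt hne
  rw [integral_eq_lintegral_of_nonneg_ae (ae_of_all _ fun y => hg_nonneg _)
    (by fun_prop : Measurable fun y => g (x, y)).aestronglyMeasurable]
  exact ENNReal.toReal_pos hne hlt.ne

theorem condExp_ae_eq_of_map_eq_withDensity (hX : Measurable X) (hY : Measurable Y)
    (hg : Measurable g) (hg_nonneg : ∀ z, 0 ≤ g z)
    (hXY : P.map (fun ω => (X ω, Y ω)) = (ν.prod μ).withDensity fun z => ENNReal.ofReal (g z))
    {f : 𝓧 × 𝓨 → E} (hf : StronglyMeasurable f)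
    (hf_int : Integrable (fun ω => f (X ω, Y ω)) P) :
    P[fun ω => f (X ω, Y ω) | MeasurableSpace.comap X m𝓧] =ᵐ[P]
      fun ω => (∫ y, g (X ω, y) ∂μ)⁻¹ • ∫ y, g (X ω, y) • f (X ω, y) ∂μ := by
  filter_upwards [(hasCondDensity_div_lintegral hY (by fun_prop) hXY).condExp_ae_eq hX hY hf
    hf_int] with ω hω
  rw [hω, integral_toReal_div_lintegral_smul
    (by fun_prop : Measurable fun y => g (X ω, y)).aestronglyMeasurable fun y => hg_nonneg _]

end JointDensity

section AdditiveNoise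

variable {G : Type*} [AddCommGroup G] [MeasurableSpace G] [MeasurableAdd₂ G] [MeasurableSub₂ G]
  {L ε : Ω → G} {μ κ : Measure G} [SFinite μ] [SFinite κ] [κ.IsAddLeftInvariant]
  {p : 𝓧 × G → ℝ} {q : G → ℝ}

namespace HasCondDensity

theorem map_prodMk_add_of_indep (prior : HasCondDensity P X L μ fun z => ENNReal.ofReal (p z))
    (hX : Measurable X) (hL : Measurable L) (hε : Measurable ε)
    (hε_indep : Indep (MeasurableSpace.comap ε inferInstance)
      (MeasurableSpace.comap X m𝓧 ⊔ MeasurableSpace.comap L inferInstance) P)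
    (hq : Measurable q) (hq_nonneg : ∀ x, 0 ≤ q x)
    (hεq : P.map ε = κ.withDensity fun x => ENNReal.ofReal (q x)) :
    P.map (fun ω => ((X ω, L ω + ε ω), L ω)) = (((P.map X).prod κ).prod μ).withDensity
      fun z => ENNReal.ofReal (q (z.1.2 - z.2) * p (z.1.1, z.2)) := by
  have indep : IndepFun (fun ω => (X ω, L ω)) ε P :=
    indep_of_indep_of_le_left hε_indep.symm (MeasurableSpace.comap_prodMk X L).le
  have likelihood : HasCondDensity P (fun ω => (X ω, L ω)) (fun ω => L ω + ε ω) κ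
      fun z => ENNReal.ofReal (q (z.2 - z.1.2)) :=
    hasCondDensity_add_of_indepFun (hX.prodMk hL) hε indep hq.ennreal_ofReal hεq measurable_snd
  simpa only [ENNReal.ofReal_mul (hq_nonneg _)] using
    prior.map_prodMk_right_comm hX hL (by fun_prop) likelihood

theorem ae_integral_pos_of_indep_add
    (prior : HasCondDensity P X L μ fun z => ENNReal.ofReal (p z))
    (hX : Measurable X) (hL : Measurable L) (hε : Measurable ε)
    (hε_indep : Indep (MeasurableSpace.comap ε inferInstance)
      (MeasurableSpace.comap X m𝓧 ⊔ MeasurableSpace.comap L inferInstance) P)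
    (hp : Measurable p) (hp_nonneg : ∀ z, 0 ≤ p z) (hq : Measurable q) (hq_nonneg : ∀ x, 0 ≤ q x)
    (hεq : P.map ε = κ.withDensity fun x => ENNReal.ofReal (q x)) :
    ∀ᵐ ω ∂P, 0 < ∫ l, q (L ω + ε ω - l) * p (X ω, l) ∂μ :=
  ae_integral_pos_of_map_eq_withDensity (by fun_prop) hL (by fun_prop)
    (fun _ => mul_nonneg (hq_nonneg _) (hp_nonneg _))
    (prior.map_prodMk_add_of_indep hX hL hε hε_indep hq hq_nonneg hεq)

theorem condExp_add_ae_eq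
    (prior : HasCondDensity P X L μ fun z => ENNReal.ofReal (p z))
    (hX : Measurable X) (hL : Measurable L) (hε : Measurable ε)
    (hε_indep : Indep (MeasurableSpace.comap ε inferInstance)
      (MeasurableSpace.comap X m𝓧 ⊔ MeasurableSpace.comap L inferInstance) P)
    (hp : Measurable p) (hp_nonneg : ∀ z, 0 ≤ p z) (hq : Measurable q) (hq_nonneg : ∀ x, 0 ≤ q x)
    (hεq : P.map ε = κ.withDensity fun x => ENNReal.ofReal (q x))
    {H : 𝓧 × G × G → E} (hH : StronglyMeasurable H)
    (hH_int : Integrable (fun ω => H (X ω, L ω, L ω + ε ω)) P) :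
    P[fun ω => H (X ω, L ω, L ω + ε ω) | MeasurableSpace.comap X m𝓧 ⊔
        MeasurableSpace.comap (fun ω => L ω + ε ω) inferInstance] =ᵐ[P]
      fun ω => (∫ l, q (L ω + ε ω - l) * p (X ω, l) ∂μ)⁻¹ •
        ∫ l, (q (L ω + ε ω - l) * p (X ω, l)) • H (X ω, l, L ω + ε ω) ∂μ := by
  have bayes := condExp_ae_eq_of_map_eq_withDensity (by fun_prop) hL (by fun_prop)
    (fun _ => mul_nonneg (hq_nonneg _) (hp_nonneg _))
    (prior.map_prodMk_add_of_indep hX hL hε hε_indep hq hq_nonneg hεq)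
    (f := fun z => H (z.1.1, z.2, z.1.2)) (hH.comp_measurable (by fun_prop)) hH_int
  rwa [← MeasurableSpace.comap_prodMk]

end HasCondDensity

end AdditiveNoise

end CondDensity

theorem bayes_formula_noisy_barrier_general
    {Ω G E : Type*} {m m0 : MeasurableSpace Ω} (hm : m ≤ m0)
    {P : Measure Ω} [IsFiniteMeasure P]
    [AddCommGroup G] [MeasurableSpace G] [MeasurableAdd₂ G] [MeasurableSub₂ G]
    [NormedAddCommGroup E] [NormedSpace ℝ E] [CompleteSpace E]
    {L : Ω → G} (hL : Measurable L) {μ : Measure G} [SFinite μ]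
    {p : Ω × G → ℝ} (hp_meas : Measurable[m.prod inferInstance] p) (hp_nonneg : ∀ z, 0 ≤ p z)
    (hp_density : ∀ B, MeasurableSet B →
      P⟦L ⁻¹' B | m⟧ =ᵐ[P] fun ω => ∫ l in B, p (ω, l) ∂μ)
    {ε : Ω → G} (hε_meas : Measurable ε)
    (hε_indep : Indep (MeasurableSpace.comap ε inferInstance)
      (m ⊔ MeasurableSpace.comap L inferInstance) P)
    {κ : Measure G} [SFinite κ] [κ.IsAddLeftInvariant]
    {q : G → ℝ} (hq_meas : Measurable q) (hq_nonneg : ∀ x, 0 ≤ q x)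
    (hq_density : P.map ε = κ.withDensity fun x => ENNReal.ofReal (q x))
    {H : Ω × G × G → E} (hH_meas : StronglyMeasurable[m.prod inferInstance] H)
    (hH_int : Integrable (fun ω => H (ω, L ω, L ω + ε ω)) P) :
    (∀ᵐ ω ∂P, 0 < ∫ l, q (L ω + ε ω - l) * p (ω, l) ∂μ) ∧
    P[fun ω => H (ω, L ω, L ω + ε ω) |
        m ⊔ MeasurableSpace.comap (fun ω => L ω + ε ω) inferInstance] =ᵐ[P]
      fun ω => (∫ l, q (L ω + ε ω - l) * p (ω, l) ∂μ)⁻¹ •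
        ∫ l, (q (L ω + ε ω - l) * p (ω, l)) • H (ω, l, L ω + ε ω) ∂μ := by
  have id_meas : Measurable[m0, m] (id : Ω → Ω) := measurable_id'' hm
  have prior : HasCondDensity (m𝓧 := m) P id L μ fun z => ENNReal.ofReal (p z) :=
    hasCondDensity_of_condExp_indicator_ae_eq id_meas hL hp_meas hp_nonneg
      (by simpa only [MeasurableSpace.comap_id, id] using hp_density)
  rw [← MeasurableSpace.comap_id (m := m)] at hε_indep ⊢
  exact ⟨prior.ae_integral_pos_of_indep_add id_meas hL hε_meas hε_indep hp_meas hp_nonneg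
      hq_meas hq_nonneg hq_density,
    prior.condExp_add_ae_eq id_meas hL hε_meas hε_indep hp_meas hp_nonneg hq_meas hq_nonneg
      hq_density hH_meas hH_int⟩

/-- **The Bayes-type formula (5.6) in the proof of Proposition 5.1.** Under Jacod's density
hypothesis, if `ε_t` is independent of `F_∞ ∨ σ(L)` with Lebesgue density `q_t`, and
`L_t := L + ε_t`, then for every bounded `F_t ⊗ B(ℝ²)`-measurable `H`, the normalizing
random variable `∫ q_t(L_t − l) p_t(l) P^L(dl)` is a.s. positive, and `P`-a.s.,
`E_P[H(·,L,L_t) | F_t ∨ σ(L_t)] = (∫ H(·,l,L_t) q_t(L_t − l) p_t(l) P^L(dl)) /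
(∫ q_t(L_t − l) p_t(l) P^L(dl))`. -/
theorem bayes_formula_noisy_barrier
    {Ω : Type*} [m0 : MeasurableSpace Ω] {P : Measure Ω} [IsProbabilityMeasure P]
    (F : Filtration ℝ≥0 m0)
    (L : Ω → ℝ) (hL : Measurable L)
    -- Jacod's density hypothesis
    (p : ℝ≥0 → ℝ → Ω → ℝ)
    (hp_nonneg : ∀ t x ω, 0 ≤ p t x ω)
    (hp_meas : ∀ t, Measurable[(F t).prod inferInstance] fun q : Ω × ℝ => p t q.2 q.1)
    (hp_pos : ∀ t, ∀ᵐ ω ∂P, 0 < p t (L ω) ω)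
    (hp_density : ∀ (t : ℝ≥0) (f : ℝ → ℝ), Measurable f → (∃ C, ∀ x, |f x| ≤ C) →
      (P[fun ω => f (L ω)|F t]) =ᵐ[P] fun ω => ∫ x, f x * p t x ω ∂(P.map L))
    -- the noise at time `t`: independent of `F_∞ ∨ σ(L)`, with Lebesgue density `q`
    (ε : Ω → ℝ) (hε_meas : Measurable ε)
    (hε_indep : Indep (MeasurableSpace.comap ε inferInstance)
      ((⨆ s, F s) ⊔ MeasurableSpace.comap L inferInstance) P)
    (q : ℝ → ℝ) (hq_meas : Measurable q) (hq_nonneg : ∀ x, 0 ≤ q x)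
    (hq_density : P.map ε = volume.withDensity fun x => ENNReal.ofReal (q x))
    (t : ℝ≥0)
    (H : Ω × ℝ × ℝ → ℝ)
    (hH_meas : Measurable[(F t).prod inferInstance] H)
    (hH_bdd : ∃ C, ∀ z, |H z| ≤ C) :
    (∀ᵐ ω ∂P, 0 < ∫ l, q (L ω + ε ω - l) * p t l ω ∂(P.map L)) ∧
    (P[fun ω => H (ω, L ω, L ω + ε ω)|
        F t ⊔ MeasurableSpace.comap (fun ω => L ω + ε ω) inferInstance]) =ᵐ[P]
      fun ω => (∫ l, H (ω, l, L ω + ε ω) * q (L ω + ε ω - l) * p t l ω ∂(P.map L))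
        / (∫ l, q (L ω + ε ω - l) * p t l ω ∂(P.map L)) := by
  obtain ⟨C, hC⟩ := hH_bdd
  have H_meas : Measurable fun ω => H (ω, L ω, L ω + ε ω) :=
    hH_meas.comp ((measurable_id'' (F.le t)).prodMk (hL.prodMk (hL.add hε_meas)))
  have indep := indep_of_indep_of_le_right hε_indep
    (sup_le_sup_right (le_iSup (fun s => (F s : MeasurableSpace Ω)) t) _)
  simpa only [smul_eq_mul, div_eq_inv_mul, mul_comm (H _), mul_assoc] using!
    bayes_formula_noisy_barrier_general (F.le t) hL (hp_meas t) (fun _ => hp_nonneg _ _ _)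
      (fun _ => condExp_indicator_ae_eq_setIntegral (hp_density t)) hε_meas indep hq_meas hq_nonneg
      hq_density hH_meas.stronglyMeasurable
      (.of_bound H_meas.aestronglyMeasurable C (ae_of_all _ fun _ => hC _))
end
end
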